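/- (Sandwich formula for the lower model.) Let A ⊆ B ⊆ ∂Δ_n be simplicial complexes. For S ⊆ E(B) let A_S be the set of simplices τ ∈ ∂Δ_n with τ ∉ A such that τ ⊆ σ for some σ ∈ S, let P_S = ∏_{τ∈A_S} p_τ (with P_∅ = 1) and P̃ = ∏_{τ∈A} p_τ. Then the lower-model probability that A ⊆ Y ⊆ B, namely Σ_{Y complex, A⊆Y⊆B} P̲_n(Y), equals P̃ · Σ_{S⊆E(B)} (−1)^{|S|} P_S. -/

import Mathlib

open Finset

/-- The full simplex `Δₙ`: all nonempty subsets of `[n] = {0,…,n}`. -/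
def simplexAll (n : ℕ) : Finset (Finset (Fin (n+1))) :=
  Finset.univ.filter fun σ => σ.Nonempty

/-- The boundary `∂Δₙ`: all nonempty proper subsets of `[n]`. -/
def bdry (n : ℕ) : Finset (Finset (Fin (n+1))) :=
  Finset.univ.filter fun σ => σ.Nonempty ∧ σ ≠ Finset.univ

/-- A hypergraph is a simplicial complex if it is closed under passing to
nonempty subsets. -/
def IsComplex {n : ℕ} (X : Finset (Finset (Fin (n+1)))) : Prop :=
  ∀ σ ∈ X, ∀ τ : Finset (Fin (n+1)), τ ⊆ σ → τ.Nonempty → τ ∈ X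

instance {n : ℕ} (X : Finset (Finset (Fin (n+1)))) : Decidable (IsComplex X) :=
  inferInstanceAs (Decidable (∀ σ ∈ X, ∀ τ : Finset (Fin (n+1)), τ ⊆ σ → τ.Nonempty → τ ∈ X))

/-- The dual hypergraph `c(X) = {σ̂ : σ ∈ ∂Δₙ, σ ∉ X}`, where `σ̂ = [n] \ σ`. -/
def dual {n : ℕ} (X : Finset (Finset (Fin (n+1)))) : Finset (Finset (Fin (n+1))) :=
  (bdry n \ X).image fun σ => σᶜ

/-- `X̄`: the smallest simplicial complex containing the hypergraph `X`. -/
def clUp {n : ℕ} (X : Finset (Finset (Fin (n+1)))) : Finset (Finset (Fin (n+1))) :=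
  Finset.univ.filter fun τ => τ.Nonempty ∧ ∃ σ ∈ X, τ ⊆ σ

/-- `X̲`: the largest simplicial complex contained in the hypergraph `X`. -/
def clLow {n : ℕ} (X : Finset (Finset (Fin (n+1)))) : Finset (Finset (Fin (n+1))) :=
  Finset.univ.filter fun τ => τ.Nonempty ∧ ∀ σ : Finset (Fin (n+1)), σ ⊆ τ → σ.Nonempty → σ ∈ X

/-- The Bernoulli measure with parameters `p` on hypergraphs contained in the
ambient set `S` of simplices: `P(X) = ∏_{σ∈X} p σ · ∏_{σ∈S\X} (1 - p σ)`. -/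
def bern {n : ℕ} (S : Finset (Finset (Fin (n+1)))) (p : Finset (Fin (n+1)) → ℝ)
    (X : Finset (Finset (Fin (n+1)))) : ℝ :=
  (∏ σ ∈ X, p σ) * ∏ σ ∈ S \ X, (1 - p σ)

/-- The upper measure: `P̄(Y) = Σ_{X ⊆ S, X̄ = Y} P(X)`. -/
def upperP {n : ℕ} (S : Finset (Finset (Fin (n+1)))) (p : Finset (Fin (n+1)) → ℝ)
    (Y : Finset (Finset (Fin (n+1)))) : ℝ :=
  ∑ X ∈ S.powerset.filter (fun X => clUp X = Y), bern S p X

/-- The lower measure: `P̲(Y) = Σ_{X ⊆ S, X̲ = Y} P(X)`. -/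
def lowerP {n : ℕ} (S : Finset (Finset (Fin (n+1)))) (p : Finset (Fin (n+1)) → ℝ)
    (Y : Finset (Finset (Fin (n+1)))) : ℝ :=
  ∑ X ∈ S.powerset.filter (fun X => clLow X = Y), bern S p X

/-- External simplices of `Y` relative to the ambient set `S`: simplices
`σ ∈ S` with `σ ∉ Y` but every nonempty proper subset of `σ` in `Y`. -/
def extSimp {n : ℕ} (S Y : Finset (Finset (Fin (n+1)))) : Finset (Finset (Fin (n+1))) :=
  S.filter fun σ => σ ∉ Y ∧ ∀ τ : Finset (Fin (n+1)), τ ⊂ σ → τ.Nonempty → τ ∈ Y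

/-- Maximal simplices of `Y`: simplices of `Y` not properly contained in another
simplex of `Y`. -/
def maxSimp {n : ℕ} (Y : Finset (Finset (Fin (n+1)))) : Finset (Finset (Fin (n+1))) :=
  Y.filter fun σ => ∀ τ ∈ Y, σ ⊆ τ → σ = τ

/-!
A complex `Y` fails to be contained in `B` exactly when it contains an external simplex of `B`,
namely a minimal element of `Y \ B`. The probability that `A ⊆ X̲ ⊆ B` is therefore obtained by
inclusion–exclusion over the events `σ ∈ X̲`, `σ ∈ E(B)`. For `S ⊆ E(B)`, the complex `X̲` contains
`A ∪ S` if and only if `X` contains the complex generated by `A ∪ S`, which is the disjoint union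
of `A` and `A_S`; by independence this has probability `P̃ · P_S`.
-/

theorem sum_filter_disjoint_eq_sum_powerset {ι α G : Type*} [DecidableEq α] [AddCommGroup G]
    (s : Finset ι) (E : Finset α) (C : ι → Finset α) (f : ι → G) :
    ∑ x ∈ s with Disjoint E (C x), f x =
      ∑ S ∈ E.powerset, (-1 : ℤ) ^ #S • ∑ x ∈ s with S ⊆ C x, f x := by
  have indicator_eq (x : ι) : ∑ S ∈ E.powerset with S ⊆ C x, (-1 : ℤ) ^ #S =
      if Disjoint E (C x) then 1 else 0 := by
    have powerset_eq : {S ∈ E.powerset | S ⊆ C x} = (E ∩ C x).powerset := by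
      ext S
      simp only [mem_filter, mem_powerset, subset_inter_iff]
    simp only [powerset_eq, sum_powerset_neg_one_pow_card, disjoint_iff_inter_eq_empty]
  calc ∑ x ∈ s with Disjoint E (C x), f x
      = ∑ x ∈ s, (∑ S ∈ E.powerset with S ⊆ C x, (-1 : ℤ) ^ #S) • f x := by
        simp only [indicator_eq, ite_smul, one_smul, zero_smul, sum_filter]
    _ = ∑ S ∈ E.powerset, (-1 : ℤ) ^ #S • ∑ x ∈ s with S ⊆ C x, f x := by
        simp only [sum_filter, sum_smul, ite_smul, zero_smul, smul_sum, smul_ite, smul_zero]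
        exact sum_comm

theorem sum_filter_superset_prod_mul_prod_sdiff {α R : Type*} [DecidableEq α] [CommSemiring R]
    {T U : Finset α} (hTU : T ⊆ U) (f g : α → R) (hfg : ∀ i ∈ U \ T, f i + g i = 1) :
    ∑ X ∈ U.powerset with T ⊆ X, (∏ i ∈ X, f i) * ∏ i ∈ U \ X, g i = ∏ i ∈ T, f i := by
  -- Replacing `g` by `0` on `T` kills exactly the terms with `T ⊈ X`.
  have superset_iff (X : Finset α) : (∀ i ∈ U \ X, i ∉ T) ↔ T ⊆ X := by
    grind
  calc ∑ X ∈ U.powerset with T ⊆ X, (∏ i ∈ X, f i) * ∏ i ∈ U \ X, g i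
      = ∑ X ∈ U.powerset, (∏ i ∈ X, f i) * ∏ i ∈ U \ X, if i ∉ T then g i else 0 := by
        simp only [prod_ite_zero, superset_iff, mul_ite, mul_zero, sum_filter]
    _ = ∏ i ∈ U, (f i + if i ∉ T then g i else 0) := (prod_add _ _ _).symm
    _ = ∏ i ∈ T, (f i + if i ∉ T then g i else 0) :=
        (prod_subset hTU fun i hiU hiT => by simp [hiT, hfg i (mem_sdiff.2 ⟨hiU, hiT⟩)]).symm
    _ = ∏ i ∈ T, f i := prod_congr rfl fun i hi => by simp [hi]

section Closure

variable {n : ℕ} {A B S T U X Y : Finset (Finset (Fin (n + 1)))} {τ : Finset (Fin (n + 1))}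

theorem mem_simplexAll : τ ∈ simplexAll n ↔ τ.Nonempty := by
  simp [simplexAll]

theorem bdry_subset_simplexAll : bdry n ⊆ simplexAll n :=
  monotone_filter_right _ fun _ _ h => h.1

theorem isComplex_bdry : IsComplex (bdry n) := by
  intro σ hσ τ hτσ hτ
  simp only [bdry, mem_filter_univ] at hσ ⊢
  exact ⟨hτ, fun h => hσ.2 (univ_subset_iff.1 (h ▸ hτσ))⟩

theorem mem_clUp : τ ∈ clUp X ↔ τ.Nonempty ∧ ∃ σ ∈ X, τ ⊆ σ := by
  simp [clUp]

theorem mem_clLow :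
    τ ∈ clLow X ↔ τ.Nonempty ∧ ∀ σ : Finset (Fin (n + 1)), σ ⊆ τ → σ.Nonempty → σ ∈ X := by
  simp [clLow]

theorem clLow_subset : clLow X ⊆ X := fun τ hτ =>
  (mem_clLow.1 hτ).2 τ Subset.rfl (mem_clLow.1 hτ).1

theorem isComplex_clLow : IsComplex (clLow X) := fun _ hσ _ hτσ hτ =>
  mem_clLow.2 ⟨hτ, fun ρ hρτ hρ => (mem_clLow.1 hσ).2 ρ (hρτ.trans hτσ) hρ⟩

theorem IsComplex.clUp_subset (hU : IsComplex U) (hTU : T ⊆ U) : clUp T ⊆ U := by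
  intro τ hτ
  obtain ⟨hτ_nonempty, σ, hσ, hτσ⟩ := mem_clUp.1 hτ
  exact hU σ (hTU hσ) τ hτσ hτ_nonempty

theorem clUp_subset_iff_subset_clLow (hT : T ⊆ simplexAll n) : clUp T ⊆ X ↔ T ⊆ clLow X := by
  constructor
  · exact fun h σ hσ => mem_clLow.2
      ⟨mem_simplexAll.1 (hT hσ), fun τ hτσ hτ => h (mem_clUp.2 ⟨hτ, σ, hσ, hτσ⟩)⟩
  · exact fun h => (isComplex_clLow.clUp_subset h).trans clLow_subset

theorem IsComplex.subset_iff_disjoint_extSimp (hY : IsComplex Y) (hYU : Y ⊆ U) :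
    Y ⊆ B ↔ Disjoint (extSimp U B) Y := by
  constructor
  · exact fun h => disjoint_left.2 fun σ hσ hσY => (mem_filter.1 hσ).2.1 (h hσY)
  · contrapose!
    intro h
    obtain ⟨σ, hσ, σ_min⟩ := exists_minimal (sdiff_nonempty.2 h)
    obtain ⟨hσY, hσB⟩ := mem_sdiff.1 hσ
    refine not_disjoint_iff.2 ⟨σ, mem_filter.2 ⟨hYU hσY, hσB, fun τ hτσ hτ => ?_⟩, hσY⟩
    by_contra hτB
    exact hτσ.not_subset (σ_min (mem_sdiff.2 ⟨hY σ hσY τ hτσ.subset hτ, hτB⟩) hτσ.subset)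

theorem IsComplex.clUp_union_eq (hU : IsComplex U) (hU₀ : U ⊆ simplexAll n) (hA : IsComplex A)
    (hAU : A ⊆ U) (hSU : S ⊆ U) :
    clUp (A ∪ S) = A ∪ {τ ∈ U | τ ∉ A ∧ ∃ σ ∈ S, τ ⊆ σ} := by
  ext τ
  constructor
  · intro hτ
    obtain ⟨hτ_nonempty, σ, hσ, hτσ⟩ := mem_clUp.1 hτ
    rcases mem_union.1 hσ with hσA | hσS
    · exact mem_union_left _ (hA σ hσA τ hτσ hτ_nonempty)
    · by_cases hτA : τ ∈ A
      · exact mem_union_left _ hτA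
      · have hτU : τ ∈ U := hU σ (hSU hσS) τ hτσ hτ_nonempty
        exact mem_union_right _ (mem_filter.2 ⟨hτU, hτA, σ, hσS, hτσ⟩)
  · intro hτ
    rcases mem_union.1 hτ with hτA | hτS
    · exact mem_clUp.2
        ⟨mem_simplexAll.1 (hU₀ (hAU hτA)), τ, mem_union_left _ hτA, Subset.rfl⟩
    · obtain ⟨hτU, -, σ, hσS, hτσ⟩ := mem_filter.1 hτS
      exact mem_clUp.2 ⟨mem_simplexAll.1 (hU₀ hτU), σ, mem_union_right _ hσS, hτσ⟩

theorem IsComplex.prod_clUp_union {M : Type*} [CommMonoid M] (hU : IsComplex U)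
    (hU₀ : U ⊆ simplexAll n) (hA : IsComplex A) (hAU : A ⊆ U) (hSU : S ⊆ U)
    (f : Finset (Fin (n + 1)) → M) :
    ∏ τ ∈ clUp (A ∪ S), f τ =
      (∏ τ ∈ A, f τ) * ∏ τ ∈ U with τ ∉ A ∧ ∃ σ ∈ S, τ ⊆ σ, f τ := by
  rw [hU.clUp_union_eq hU₀ hA hAU hSU, prod_union]
  exact disjoint_left.2 fun τ hτA hτ => (mem_filter.1 hτ).2.1 hτA

end Closure

section LowerModel

variable {n : ℕ} {U T : Finset (Finset (Fin (n + 1)))}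

theorem sum_filter_lowerP (p : Finset (Fin (n + 1)) → ℝ)
    (Q : Finset (Finset (Fin (n + 1))) → Prop) [DecidablePred Q] :
    ∑ Y ∈ U.powerset with Q Y, lowerP U p Y = ∑ X ∈ U.powerset with Q (clLow X), bern U p X := by
  simp only [lowerP, sum_fiberwise_eq_sum_filter]
  refine sum_congr (filter_congr fun X hX => ?_) fun _ _ => rfl
  have clLow_mem : clLow X ∈ U.powerset := mem_powerset.2 (clLow_subset.trans (mem_powerset.1 hX))
  rw [mem_filter, and_iff_right clLow_mem]

theorem IsComplex.sum_bern_filter_subset_clLow (hU : IsComplex U) (hU₀ : U ⊆ simplexAll n)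
    (hTU : T ⊆ U) (p : Finset (Fin (n + 1)) → ℝ) :
    ∑ X ∈ U.powerset with T ⊆ clLow X, bern U p X = ∏ τ ∈ clUp T, p τ := by
  have hT : T ⊆ simplexAll n := hTU.trans hU₀
  simp only [← clUp_subset_iff_subset_clLow hT]
  exact sum_filter_superset_prod_mul_prod_sdiff (hU.clUp_subset hTU) p (1 - p ·)
    fun _ _ => add_sub_cancel _ _

end LowerModel

theorem lower_sandwich_general {n : ℕ} (p : Finset (Fin (n + 1)) → ℝ)
    {U A : Finset (Finset (Fin (n + 1)))} (hU : IsComplex U) (hU₀ : U ⊆ simplexAll n)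
    (hA : IsComplex A) (hAU : A ⊆ U) (B : Finset (Finset (Fin (n + 1)))) :
    ∑ Y ∈ U.powerset with IsComplex Y ∧ A ⊆ Y ∧ Y ⊆ B, lowerP U p Y =
      (∏ τ ∈ A, p τ) * ∑ S ∈ (extSimp U B).powerset,
        (-1 : ℝ) ^ #S * ∏ τ ∈ U with τ ∉ A ∧ ∃ σ ∈ S, τ ⊆ σ, p τ := by
  have ext_subset {S : Finset (Finset (Fin (n + 1)))} (hS : S ∈ (extSimp U B).powerset) : S ⊆ U :=
    (mem_powerset.1 hS).trans (filter_subset _ _)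
  calc ∑ Y ∈ U.powerset with IsComplex Y ∧ A ⊆ Y ∧ Y ⊆ B, lowerP U p Y
      = ∑ X ∈ U.powerset with A ⊆ clLow X ∧ clLow X ⊆ B, bern U p X := by
        simp only [sum_filter_lowerP, isComplex_clLow, true_and]
    _ = ∑ X ∈ {X ∈ U.powerset | A ⊆ clLow X} with Disjoint (extSimp U B) (clLow X), bern U p X := by
        rw [filter_filter]
        refine sum_congr (filter_congr fun X hX => and_congr_right fun _ => ?_) fun _ _ => rfl
        exact isComplex_clLow.subset_iff_disjoint_extSimp (clLow_subset.trans (mem_powerset.1 hX))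
    _ = ∑ S ∈ (extSimp U B).powerset,
          (-1 : ℤ) ^ #S • ∑ X ∈ U.powerset with A ∪ S ⊆ clLow X, bern U p X := by
        rw [sum_filter_disjoint_eq_sum_powerset]
        simp only [filter_filter, union_subset_iff]
    _ = ∑ S ∈ (extSimp U B).powerset, (-1 : ℤ) ^ #S • ∏ τ ∈ clUp (A ∪ S), p τ :=
        sum_congr rfl fun S hS => by
          rw [hU.sum_bern_filter_subset_clLow hU₀ (union_subset hAU (ext_subset hS))]
    _ = (∏ τ ∈ A, p τ) * ∑ S ∈ (extSimp U B).powerset,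
          (-1 : ℝ) ^ #S * ∏ τ ∈ U with τ ∉ A ∧ ∃ σ ∈ S, τ ⊆ σ, p τ := by
        rw [mul_sum]
        refine sum_congr rfl fun S hS => ?_
        rw [hU.prod_clUp_union hU₀ hA hAU (ext_subset hS), zsmul_eq_mul, mul_left_comm,
          Int.cast_pow, Int.cast_neg, Int.cast_one]

/-- Sandwich formula for the lower model: for simplicial complexes
`A ⊆ B ⊆ ∂Δₙ`, the lower-model probability that `A ⊆ Y ⊆ B` equals
`P̃ · Σ_{S ⊆ E(B)} (-1)^{|S|} P_S`, where `P̃ = ∏_{τ∈A} p_τ` and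
`P_S = ∏_{τ∈A_S} p_τ` with `A_S = {τ ∉ A : τ ⊆ σ for some σ ∈ S}`. -/
theorem lower_sandwich (n : ℕ) (hn : 1 ≤ n) (p : Finset (Fin (n+1)) → ℝ)
    (hp : ∀ σ ∈ bdry n, 0 ≤ p σ ∧ p σ ≤ 1)
    (A B : Finset (Finset (Fin (n+1))))
    (hA : IsComplex A) (hB : IsComplex B) (hAB : A ⊆ B) (hBb : B ⊆ bdry n) :
    ∑ Y ∈ (bdry n).powerset.filter (fun Y => IsComplex Y ∧ A ⊆ Y ∧ Y ⊆ B),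
        lowerP (bdry n) p Y
    = (∏ τ ∈ A, p τ) *
      ∑ S ∈ (extSimp (bdry n) B).powerset,
        (-1 : ℝ) ^ S.card *
          ∏ τ ∈ (bdry n).filter (fun τ => τ ∉ A ∧ ∃ σ ∈ S, τ ⊆ σ), p τ := by
  exact lower_sandwich_general p isComplex_bdry bdry_subset_simplexAll hA (hAB.trans hBb) B
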